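/- The mean curvature H of the Killing graph of u with respect to N = (1/W)(γY − ϑ_*∇u) satisfies the divergence-form identity nH = div(∇u/W) − (1/(2γW))⟨∇γ, ∇u⟩ = div(∇u/W) − (γ/W)⟨∇̄_Y Y, ∇u⟩, where div and ⟨·,·⟩ are taken in the leaf P; equivalently, in nondivergence form, nH = (σ^{ij} − u^i u^j/W²) u_{i;j}/W − ((2γ + |∇u|²)/W³) ⟨∇γ/(2γ), ∇u⟩. -/

import Mathlib

/-!
Formalization of the setting of "Mean curvature flow of Killing graphs"
(Lira–Wanderley).  The integral leaf `P` of the distribution orthogonal to the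
Killing field `Y` is presented in coordinates as `ℝⁿ` (points `Fin n → ℝ`)
carrying a Riemannian metric `σ`; the ambient manifold is the warped product
`M = P ×_{1/√γ} ℝ` with coordinates `(x⁰ = s, x)` and metric
`ḡ = σ + (1/γ) ds²`, where `γ = 1/|Y|²` and `Y = ∂/∂x⁰`.  All geometric
quantities (Christoffel symbols, second fundamental form and mean curvature of
a Killing graph, ambient Ricci curvature, …) are defined concretely from this
data.
-/

noncomputable section

open Real MeasureTheory Filter Topology

namespace KMCF

variable {n : ℕ}

/-- Partial derivative of a function on the coordinate chart of the leaf `P`. -/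
def pd (f : (Fin n → ℝ) → ℝ) (i : Fin n) (x : Fin n → ℝ) : ℝ :=
  fderiv ℝ f x (Pi.single i 1)

/-- Component of an ambient tangent vector `(v⁰, vⁱ)` of `M = P ×_{1/√γ} ℝ`. -/
def vComp (v : ℝ × (Fin n → ℝ)) (a : Fin (n + 1)) : ℝ :=
  if ha : a = 0 then v.1 else v.2 (a.pred ha)

/-- Ambient partial derivative (nothing depends on the flow parameter `x⁰`). -/
def ambPd (f : (Fin n → ℝ) → ℝ) (a : Fin (n + 1)) (x : Fin n → ℝ) : ℝ :=
  if ha : a = 0 then 0 else pd f (a.pred ha) x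

/-- Coordinate tangent vectors `X_* ∂_i = ∂_i + u_i ∂_0` of the Killing graph
`X(x) = ϑ(u(x), x)`. -/
def tangentV (u : (Fin n → ℝ) → ℝ) (i : Fin n) (x : Fin n → ℝ) : ℝ × (Fin n → ℝ) :=
  (pd u i x, Pi.single i 1)

/-- Coordinate data of the integral leaf `P`: the metric `σ`, its inverse, and
the warping function `γ = 1/|Y|²` of the Killing field `Y`. -/
structure LeafData (n : ℕ) where
  σ : (Fin n → ℝ) → Fin n → Fin n → ℝ
  σInv : (Fin n → ℝ) → Fin n → Fin n → ℝ
  γ : (Fin n → ℝ) → ℝ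
  σ_symm : ∀ x i j, σ x i j = σ x j i
  σ_posdef : ∀ x (v : Fin n → ℝ), v ≠ 0 → 0 < ∑ i, ∑ j, σ x i j * v i * v j
  σInv_mul_σ : ∀ x i j, (∑ k, σInv x i k * σ x k j) = if i = j then (1 : ℝ) else 0
  σ_smooth : ∀ i j, ContDiff ℝ (⊤ : ℕ∞) fun x => σ x i j
  γ_pos : ∀ x, 0 < γ x
  γ_smooth : ContDiff ℝ (⊤ : ℕ∞) γ

namespace LeafData

variable (D : LeafData n)

/-- Christoffel symbols `Γ^k_{ij}` of the leaf metric `σ`. -/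
def Γc (x : Fin n → ℝ) (i j k : Fin n) : ℝ :=
  (1 / 2) * ∑ l, D.σInv x k l *
    (pd (fun y => D.σ y j l) i x + pd (fun y => D.σ y i l) j x -
      pd (fun y => D.σ y i j) l x)

/-- Covariant Hessian `f_{i;j}` in `P`. -/
def hess (f : (Fin n → ℝ) → ℝ) (i j : Fin n) (x : Fin n → ℝ) : ℝ :=
  pd (pd f j) i x - ∑ k, D.Γc x i j k * pd f k x

/-- Raised gradient components `f^i = σ^{ij} f_j`. -/
def gradUp (f : (Fin n → ℝ) → ℝ) (i : Fin n) (x : Fin n → ℝ) : ℝ :=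
  ∑ j, D.σInv x i j * pd f j x

/-- Inner product `⟨∇f, ∇g⟩` of gradients in `P`. -/
def inner2 (f g : (Fin n → ℝ) → ℝ) (x : Fin n → ℝ) : ℝ :=
  ∑ i, ∑ j, D.σInv x i j * pd f i x * pd g j x

/-- `|∇u|²`. -/
def gradSq (u : (Fin n → ℝ) → ℝ) (x : Fin n → ℝ) : ℝ := D.inner2 u u x

/-- `W = √(γ + |∇u|²)`. -/
def Wf (u : (Fin n → ℝ) → ℝ) (x : Fin n → ℝ) : ℝ :=
  Real.sqrt (D.γ x + D.gradSq u x)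

/-- Divergence in `P` of a vector field with raised components `Z^i`. -/
def divP (Z : Fin n → (Fin n → ℝ) → ℝ) (x : Fin n → ℝ) : ℝ :=
  ∑ i, (pd (Z i) i x + ∑ k, D.Γc x i k i * Z k x)

/-- Divergence in the ambient warped product `M = P ×_{1/√γ} ℝ` of an
`s`-independent horizontal vector field (`Γ̄⁰_{0i} = −γ_i/(2γ)`). -/
def divM (Z : Fin n → (Fin n → ℝ) → ℝ) (x : Fin n → ℝ) : ℝ :=
  D.divP Z x - ∑ i, (pd D.γ i x / (2 * D.γ x)) * Z i x

/-- The ambient warped-product metric `ḡ` of `M` in the coordinates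
`(x⁰ = s, x)`:  `ḡ₀₀ = 1/γ`, `ḡ₀ᵢ = 0`, `ḡᵢⱼ = σᵢⱼ`. -/
def ambG (x : Fin n → ℝ) (a b : Fin (n + 1)) : ℝ :=
  if ha : a = 0 then (if b = 0 then 1 / D.γ x else 0)
  else if hb : b = 0 then 0 else D.σ x (a.pred ha) (b.pred hb)

/-- The inverse ambient metric. -/
def ambGInv (x : Fin n → ℝ) (a b : Fin (n + 1)) : ℝ :=
  if ha : a = 0 then (if b = 0 then D.γ x else 0)
  else if hb : b = 0 then 0 else D.σInv x (a.pred ha) (b.pred hb)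

/-- Ambient Christoffel symbols `Γ̄^a_{bc}` of the warped-product metric. -/
def ambΓ (x : Fin n → ℝ) (a b c : Fin (n + 1)) : ℝ :=
  (1 / 2) * ∑ e, D.ambGInv x a e *
    (ambPd (fun y => D.ambG y b e) c x + ambPd (fun y => D.ambG y c e) b x -
      ambPd (fun y => D.ambG y b c) e x)

/-- Ambient curvature tensor `R̄^a_{bcd}`. -/
def ambRiem (x : Fin n → ℝ) (a b c d : Fin (n + 1)) : ℝ :=
  ambPd (fun y => D.ambΓ y a d b) c x - ambPd (fun y => D.ambΓ y a c b) d x +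
    (∑ e, D.ambΓ x a c e * D.ambΓ x e d b) -
    ∑ e, D.ambΓ x a d e * D.ambΓ x e c b

/-- Ambient Ricci curvature as a bilinear form on tangent vectors of `M`. -/
def Ric (x : Fin n → ℝ) (v w : ℝ × (Fin n → ℝ)) : ℝ :=
  ∑ b, ∑ c, (∑ a, D.ambRiem x a b a c) * vComp v b * vComp w c

/-- The ambient Riemannian inner product `⟨·,·⟩` at `x`. -/
def ambInner (x : Fin n → ℝ) (v w : ℝ × (Fin n → ℝ)) : ℝ :=
  ∑ a, ∑ b, D.ambG x a b * vComp v a * vComp w b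

/-- Ambient covariant derivative `∇̄_v Z` of an `s`-independent vector field
`Z` in the direction of the tangent vector `v` at `x`. -/
def ambCov (Z : (Fin n → ℝ) → ℝ × (Fin n → ℝ)) (v : ℝ × (Fin n → ℝ))
    (x : Fin n → ℝ) : ℝ × (Fin n → ℝ) :=
  ((∑ i, v.2 i * pd (fun y => (Z y).1) i x) +
      ∑ b, ∑ c, D.ambΓ x 0 b c * vComp v b * vComp (Z x) c,
    fun k =>
      (∑ i, v.2 i * pd (fun y => (Z y).2 k) i x) +
        ∑ b, ∑ c, D.ambΓ x k.succ b c * vComp v b * vComp (Z x) c)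

/-- The unit normal `N = (1/W)(γ Y − ϑ_* ∇u)` of the Killing graph. -/
def normalN (u : (Fin n → ℝ) → ℝ) (x : Fin n → ℝ) : ℝ × (Fin n → ℝ) :=
  (D.γ x / D.Wf u x, fun k => -D.gradUp u k x / D.Wf u x)

/-- Second fundamental form `a_{ij} = ⟨∇̄_{X_*∂_i} X_*∂_j, N⟩` of the graph. -/
def sff (u : (Fin n → ℝ) → ℝ) (i j : Fin n) (x : Fin n → ℝ) : ℝ :=
  D.ambInner x (D.ambCov (fun y => tangentV u j y) (tangentV u i x) x)
    (D.normalN u x)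

/-- Induced metric `g_{ij} = σ_{ij} + u_i u_j / γ` of the graph. -/
def gmet (u : (Fin n → ℝ) → ℝ) (x : Fin n → ℝ) (i j : Fin n) : ℝ :=
  D.σ x i j + pd u i x * pd u j x / D.γ x

/-- Inverse induced metric `g^{ij} = σ^{ij} − u^i u^j / W²`. -/
def gInv (u : (Fin n → ℝ) → ℝ) (x : Fin n → ℝ) (i j : Fin n) : ℝ :=
  D.σInv x i j - D.gradUp u i x * D.gradUp u j x / (D.Wf u x) ^ 2

/-- `n` times the mean curvature of the graph: `nH = g^{ij} a_{ij}`. -/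
def nH (u : (Fin n → ℝ) → ℝ) (x : Fin n → ℝ) : ℝ :=
  ∑ i, ∑ j, D.gInv u x i j * D.sff u i j x

/-- Christoffel symbols of the induced metric of the graph. -/
def Γg (u : (Fin n → ℝ) → ℝ) (x : Fin n → ℝ) (i j k : Fin n) : ℝ :=
  (1 / 2) * ∑ l, D.gInv u x k l *
    (pd (fun y => D.gmet u y j l) i x + pd (fun y => D.gmet u y i l) j x -
      pd (fun y => D.gmet u y i j) l x)

/-- Covariant derivative `∇_k T_{ij}` in `P` of a 2-tensor. -/
def covP2 (T : Fin n → Fin n → (Fin n → ℝ) → ℝ) (k i j : Fin n)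
    (x : Fin n → ℝ) : ℝ :=
  pd (T i j) k x - ∑ l, D.Γc x k i l * T l j x - ∑ l, D.Γc x k j l * T i l x

/-- Covariant derivative `∇^Σ_k T_{ij}` on the graph of a 2-tensor. -/
def covG2 (u : (Fin n → ℝ) → ℝ) (T : Fin n → Fin n → (Fin n → ℝ) → ℝ)
    (k i j : Fin n) (x : Fin n → ℝ) : ℝ :=
  pd (T i j) k x - ∑ l, D.Γg u x k i l * T l j x - ∑ l, D.Γg u x k j l * T i l x

/-- Components of the gradient on `Σ` of a function of `x`. -/
def gradG (u f : (Fin n → ℝ) → ℝ) (j : Fin n) (x : Fin n → ℝ) : ℝ :=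
  ∑ k, D.gInv u x j k * pd f k x

/-- Components, in the basis `X_*∂_i`, of the tangential projection `Y^T`
of the Killing field:  `Y^T = (u^i/W²) X_*∂_i`. -/
def YTc (u : (Fin n → ℝ) → ℝ) (i : Fin n) (x : Fin n → ℝ) : ℝ :=
  D.gradUp u i x / (D.Wf u x) ^ 2

/-- Squared norm `|A|²` of the second fundamental form. -/
def Anorm2 (u : (Fin n → ℝ) → ℝ) (x : Fin n → ℝ) : ℝ :=
  ∑ i, ∑ j, ∑ k, ∑ l,
    D.gInv u x i k * D.gInv u x j l * D.sff u i j x * D.sff u k l x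

/-- Mixed components `a_i^j = g^{jk} a_{ik}` of the Weingarten map. -/
def aMix (u : (Fin n → ℝ) → ℝ) (i j : Fin n) (x : Fin n → ℝ) : ℝ :=
  ∑ k, D.gInv u x j k * D.sff u i k x

/-- Raised spatial components `N^j = −u^j/W` of the unit normal. -/
def NupS (u : (Fin n → ℝ) → ℝ) (j : Fin n) (x : Fin n → ℝ) : ℝ :=
  -D.gradUp u j x / D.Wf u x

/-- The support-type function `θ = ⟨∇d, N⟩`. -/
def theta (u d : (Fin n → ℝ) → ℝ) (x : Fin n → ℝ) : ℝ :=
  D.ambInner x ((0 : ℝ), fun k => D.gradUp d k x) (D.normalN u x)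

/-- `κ = ⟨γ ∇̄_Y Y, ∇d⟩ = ⟨∇γ, ∇d⟩/(2γ)`. -/
def kappa (d : (Fin n → ℝ) → ℝ) (x : Fin n → ℝ) : ℝ :=
  D.inner2 D.γ d x / (2 * D.γ x)

/-- The Korevaar auxiliary function `h = 1 + α d − ϕ ⟨∇d, N⟩`. -/
def hKor (u d ϕ : (Fin n → ℝ) → ℝ) (α : ℝ) (x : Fin n → ℝ) : ℝ :=
  1 + α * d x - ϕ x * D.theta u d x

/-- `η = e^{Ku} h`. -/
def etaKor (u d ϕ : (Fin n → ℝ) → ℝ) (K α : ℝ) (x : Fin n → ℝ) : ℝ :=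
  Real.exp (K * u x) * D.hKor u d ϕ α x

/-- Riemannian integral over `Ω ⊆ P` (density `√(det σ)`). -/
def intP (Ω : Set (Fin n → ℝ)) (f : (Fin n → ℝ) → ℝ) : ℝ :=
  ∫ x in Ω, f x * Real.sqrt (Matrix.det (Matrix.of fun i j => D.σ x i j))

/-- The nonparametric mean curvature flow equation (23):
`u_t = (σ^{ij} − u^i u^j/W²) u_{i;j} − (1/(2γ) + 1/(2W²)) γ^i u_i − W𝓗`. -/
def SolvesFlowOn (Ω : Set (Fin n → ℝ)) (J : Set ℝ) (𝓗 : (Fin n → ℝ) → ℝ)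
    (u : (Fin n → ℝ) → ℝ → ℝ) : Prop :=
  ∀ x ∈ Ω, ∀ t ∈ J,
    deriv (u x) t =
      (∑ i, ∑ j, D.gInv (fun y => u y t) x i j * D.hess (fun y => u y t) i j x) -
        (1 / (2 * D.γ x) + 1 / (2 * (D.Wf (fun y => u y t) x) ^ 2)) *
          D.inner2 D.γ (fun y => u y t) x -
        D.Wf (fun y => u y t) x * 𝓗 x

/-- The divergence form (21) of the flow equation:
`u_t = W div(∇u/W) − W𝓗 − γ⟨∇̄_Y Y, ∇u⟩`. -/
def SolvesFlowDivOn (Ω : Set (Fin n → ℝ)) (J : Set ℝ) (𝓗 : (Fin n → ℝ) → ℝ)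
    (u : (Fin n → ℝ) → ℝ → ℝ) : Prop :=
  ∀ x ∈ Ω, ∀ t ∈ J,
    deriv (u x) t =
      D.Wf (fun y => u y t) x *
          D.divP (fun i y => D.gradUp (fun z => u z t) i y /
            D.Wf (fun z => u z t) y) x -
        D.Wf (fun y => u y t) x * 𝓗 x -
        D.γ x * (D.inner2 D.γ (fun y => u y t) x / (2 * (D.γ x) ^ 2))

/-- The Neumann condition `⟨N, ν⟩ = ϕ` on `∂Ω`. -/
def NeumannOn (Ω : Set (Fin n → ℝ)) (J : Set ℝ) (ν : (Fin n → ℝ) → Fin n → ℝ)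
    (ϕ : (Fin n → ℝ) → ℝ) (u : (Fin n → ℝ) → ℝ → ℝ) : Prop :=
  ∀ x ∈ frontier Ω, ∀ t ∈ J,
    D.ambInner x (D.normalN (fun y => u y t) x) ((0 : ℝ), ν x) = ϕ x

/-- The stationary prescribed mean curvature equation (5) with the prescribed
contact angle condition (6). -/
def SolvesStationary (Ω : Set (Fin n → ℝ)) (ν : (Fin n → ℝ) → Fin n → ℝ)
    (𝓗 ϕ : (Fin n → ℝ) → ℝ) (v : (Fin n → ℝ) → ℝ) : Prop :=
  (∀ x ∈ Ω,
      D.divP (fun i y => D.gradUp v i y / D.Wf v y) x -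
          D.γ x * (D.inner2 D.γ v x / (2 * (D.γ x) ^ 2 * D.Wf v x)) = 𝓗 x) ∧
    ∀ x ∈ frontier Ω, D.ambInner x (D.normalN v x) ((0 : ℝ), ν x) = ϕ x

/-- The translating-soliton equation (41) with Neumann condition (42). -/
def SolvesSoliton (Ω : Set (Fin n → ℝ)) (ν : (Fin n → ℝ) → Fin n → ℝ)
    (𝓗 ϕ : (Fin n → ℝ) → ℝ) (C : ℝ) (v : (Fin n → ℝ) → ℝ) : Prop :=
  (∀ x ∈ Ω,
      D.divP (fun i y => D.gradUp v i y / D.Wf v y) x -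
          D.γ x * (D.inner2 D.γ v x / (2 * (D.γ x) ^ 2 * D.Wf v x)) =
        𝓗 x + C / D.Wf v x) ∧
    ∀ x ∈ frontier Ω, D.ambInner x (D.normalN v x) ((0 : ℝ), ν x) = ϕ x

end LeafData

end KMCF

namespace KMCF

open LeafData

section helpers
variable {n : ℕ} (D : LeafData n)

lemma vComp_zero' (v : ℝ × (Fin n → ℝ)) : vComp v 0 = v.1 := by simp [vComp]
lemma vComp_succ' (v : ℝ × (Fin n → ℝ)) (i : Fin n) : vComp v i.succ = v.2 i := by
  simp [vComp, Fin.succ_ne_zero]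
lemma ambPd_zero' (f : (Fin n → ℝ) → ℝ) (x : Fin n → ℝ) : ambPd f 0 x = 0 := by simp [ambPd]
lemma ambPd_succ' (f : (Fin n → ℝ) → ℝ) (i : Fin n) (x : Fin n → ℝ) :
    ambPd f i.succ x = pd f i x := by simp [ambPd, Fin.succ_ne_zero]
lemma ambG_zz (x : Fin n → ℝ) : D.ambG x 0 0 = 1 / D.γ x := by simp [ambG]
lemma ambG_zs (x : Fin n → ℝ) (i : Fin n) : D.ambG x 0 i.succ = 0 := by
  simp [ambG, Fin.succ_ne_zero]
lemma ambG_sz (x : Fin n → ℝ) (i : Fin n) : D.ambG x i.succ 0 = 0 := by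
  simp [ambG, Fin.succ_ne_zero]
lemma ambG_ss (x : Fin n → ℝ) (i j : Fin n) : D.ambG x i.succ j.succ = D.σ x i j := by
  simp [ambG, Fin.succ_ne_zero]
lemma ambGInv_zz (x : Fin n → ℝ) : D.ambGInv x 0 0 = D.γ x := by simp [ambGInv]
lemma ambGInv_zs (x : Fin n → ℝ) (i : Fin n) : D.ambGInv x 0 i.succ = 0 := by
  simp [ambGInv, Fin.succ_ne_zero]
lemma ambGInv_sz (x : Fin n → ℝ) (i : Fin n) : D.ambGInv x i.succ 0 = 0 := by
  simp [ambGInv, Fin.succ_ne_zero]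
lemma ambGInv_ss (x : Fin n → ℝ) (i j : Fin n) : D.ambGInv x i.succ j.succ = D.σInv x i j := by
  simp [ambGInv, Fin.succ_ne_zero]

lemma pd_const' (c : ℝ) (i : Fin n) (x : Fin n → ℝ) : pd (fun _ => c) i x = 0 := by
  simp [pd]

lemma pd_add' {f g : (Fin n → ℝ) → ℝ} {x : Fin n → ℝ} (i : Fin n)
    (hf : DifferentiableAt ℝ f x) (hg : DifferentiableAt ℝ g x) :
    pd (fun y => f y + g y) i x = pd f i x + pd g i x := by
  simp only [pd]
  rw [fderiv_fun_add hf hg]; simp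

lemma pd_mul' {f g : (Fin n → ℝ) → ℝ} {x : Fin n → ℝ} (i : Fin n)
    (hf : DifferentiableAt ℝ f x) (hg : DifferentiableAt ℝ g x) :
    pd (fun y => f y * g y) i x = pd f i x * g x + f x * pd g i x := by
  simp only [pd]
  rw [fderiv_fun_mul hf hg]; simp; ring

lemma pd_sum' {ι : Type*} (s : Finset ι) {f : ι → (Fin n → ℝ) → ℝ} {x : Fin n → ℝ} (i : Fin n)
    (hf : ∀ k, DifferentiableAt ℝ (f k) x) :
    pd (fun y => ∑ k ∈ s, f k y) i x = ∑ k ∈ s, pd (f k) i x := by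
  simp only [pd]
  rw [fderiv_fun_sum (fun k _ => hf k)]; simp

lemma pd_inv' {f : (Fin n → ℝ) → ℝ} {x : Fin n → ℝ} (i : Fin n)
    (hf : DifferentiableAt ℝ f x) (h0 : f x ≠ 0) :
    pd (fun y => 1 / f y) i x = - pd f i x / (f x) ^ 2 := by
  have h := ((hasDerivAt_inv h0).comp_hasFDerivAt x hf.hasFDerivAt).fderiv
  have e : ((fun y => y⁻¹) ∘ f) = fun y => (f y)⁻¹ := rfl
  rw [e] at h
  simp only [pd, one_div]
  rw [h]; simp; ring

lemma pd_sqrt' {f : (Fin n → ℝ) → ℝ} {x : Fin n → ℝ} (i : Fin n)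
    (hf : DifferentiableAt ℝ f x) (h0 : f x ≠ 0) :
    pd (fun y => Real.sqrt (f y)) i x = pd f i x / (2 * Real.sqrt (f x)) := by
  have h := ((hf.hasFDerivAt).sqrt h0).fderiv
  simp only [pd]
  rw [h]; simp; ring

lemma contDiff_pd {f : (Fin n → ℝ) → ℝ} (hf : ContDiff ℝ (⊤ : ℕ∞) f) (i : Fin n) :
    ContDiff ℝ (⊤ : ℕ∞) (pd f i) := by
  have h : ContDiff ℝ (⊤ : ℕ∞) (fderiv ℝ f) := hf.fderiv_right (by simp)
  exact h.clm_apply contDiff_const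

lemma diff_of {f : (Fin n → ℝ) → ℝ} (hf : ContDiff ℝ (⊤ : ℕ∞) f) : Differentiable ℝ f :=
  hf.differentiable (by simp)

lemma mat_inv_mul (x : Fin n → ℝ) :
    (Matrix.of (D.σInv x)) * (Matrix.of (D.σ x)) = 1 := by
  ext i j
  simp [Matrix.mul_apply, D.σInv_mul_σ, Matrix.one_apply]

lemma mat_mul_inv (x : Fin n → ℝ) :
    (Matrix.of (D.σ x)) * (Matrix.of (D.σInv x)) = 1 :=
  mul_eq_one_comm.mp (mat_inv_mul D x)

lemma σ_mul_σInv (x : Fin n → ℝ) (i j : Fin n) :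
    (∑ k, D.σ x i k * D.σInv x k j) = if i = j then (1 : ℝ) else 0 := by
  have := congrFun (congrFun (mat_mul_inv D x) i) j
  simpa [Matrix.mul_apply, Matrix.one_apply] using this

lemma σInv_symm (x : Fin n → ℝ) (i j : Fin n) : D.σInv x i j = D.σInv x j i := by
  have hs : (Matrix.of (D.σ x)).transpose = Matrix.of (D.σ x) := by
    ext a b; simp [D.σ_symm x b a]
  have h1 : (Matrix.of (D.σInv x)).transpose * Matrix.of (D.σ x) = 1 := by
    have := congrArg Matrix.transpose (mat_mul_inv D x)
    rwa [Matrix.transpose_mul, hs, Matrix.transpose_one] at this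
  have h2 : (Matrix.of (D.σInv x)).transpose = Matrix.of (D.σInv x) :=
    left_inv_eq_right_inv h1 (mat_mul_inv D x)
  have := congrFun (congrFun h2 j) i
  simpa using this

lemma det_diff {M : (Fin n → ℝ) → Matrix (Fin n) (Fin n) ℝ}
    (h : ∀ i j, Differentiable ℝ fun x => M x i j) : Differentiable ℝ fun x => (M x).det := by
  simp only [Matrix.det_apply]
  fun_prop

lemma σInv_diff (i j : Fin n) : Differentiable ℝ fun x => D.σInv x i j := by
  have e : ∀ x, D.σInv x i j =
      ((Matrix.of (D.σ x)).det)⁻¹ * ((Matrix.of (D.σ x)).updateRow j (Pi.single i 1)).det := by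
    intro x
    have h : (Matrix.of (D.σ x))⁻¹ = Matrix.of (D.σInv x) :=
      Matrix.inv_eq_left_inv (mat_inv_mul D x)
    have h2 := congrFun (congrFun h i) j
    rw [Matrix.inv_def] at h2
    simp only [Matrix.smul_apply, Matrix.adjugate_apply, Ring.inverse_eq_inv', smul_eq_mul,
      Matrix.of_apply] at h2
    exact h2.symm
  have hd : ∀ x, (Matrix.of (D.σ x)).det ≠ 0 := by
    intro x h
    have := congrArg Matrix.det (mat_inv_mul D x)
    rw [Matrix.det_mul, h] at this
    simp at this
  simp only [e]
  refine Differentiable.mul (Differentiable.inv (det_diff ?_) hd) (det_diff ?_)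
  · intro a b; exact diff_of (D.σ_smooth a b)
  · intro a b
    by_cases hab : a = j
    · subst hab; simp
    · simp only [Matrix.updateRow_ne hab]
      exact diff_of (D.σ_smooth a b)

lemma pd_σInv (x : Fin n → ℝ) (i j m : Fin n) :
    pd (fun y => D.σInv y i j) m x =
      - ∑ p, ∑ l, D.σInv x i p * pd (fun y => D.σ y p l) m x * D.σInv x l j := by
  have h0 : ∀ l, ∑ p, (pd (fun y => D.σInv y i p) m x * D.σ x p l +
      D.σInv x i p * pd (fun y => D.σ y p l) m x) = 0 := by
    intro l
    have e : (fun y => ∑ p, D.σInv y i p * D.σ y p l) = fun _ => if i = l then (1:ℝ) else 0 := by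
      funext y; exact D.σInv_mul_σ y i l
    have e2 := congrArg (fun f => pd f m x) e
    simp only [pd_const'] at e2
    rw [pd_sum' _ _ (fun k => ((σInv_diff D i k) x).fun_mul (diff_of (D.σ_smooth k l) x))] at e2
    rw [← e2]
    refine Finset.sum_congr rfl fun p _ => ?_
    rw [pd_mul' m ((σInv_diff D i p) x) (diff_of (D.σ_smooth p l) x)]
  have h1 : ∑ l, (∑ p, (pd (fun y => D.σInv y i p) m x * D.σ x p l +
      D.σInv x i p * pd (fun y => D.σ y p l) m x)) * D.σInv x l j = 0 := by simp [h0]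
  have h2 : ∑ l, ∑ p, pd (fun y => D.σInv y i p) m x * D.σ x p l * D.σInv x l j =
      pd (fun y => D.σInv y i j) m x := by
    rw [Finset.sum_comm]
    simp only [mul_assoc, ← Finset.mul_sum, σ_mul_σInv]
    simp
  simp only [Finset.sum_add_distrib, add_mul, Finset.sum_mul] at h1
  rw [h2] at h1
  rw [Finset.sum_comm] 
  linarith

lemma pd_σInv_Γ (x : Fin n → ℝ) (i j m : Fin n) :
    pd (fun y => D.σInv y i j) m x =
      - (∑ l, D.Γc x m l i * D.σInv x l j) - ∑ l, D.Γc x m l j * D.σInv x i l := by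
  have hA : ∑ l, D.Γc x m l i * D.σInv x l j = ∑ p, ∑ l, (1/2) * (D.σInv x i p *
      (pd (fun y => D.σ y p l) m x + pd (fun y => D.σ y m p) l x - pd (fun y => D.σ y m l) p x)
      * D.σInv x l j) := by
    rw [Finset.sum_comm]
    refine Finset.sum_congr rfl fun l _ => ?_
    simp only [Γc, Finset.mul_sum, Finset.sum_mul]
    refine Finset.sum_congr rfl fun p _ => ?_
    simp only [D.σ_symm _ l p]; ring
  have hB : ∑ l, D.Γc x m l j * D.σInv x i l = ∑ p, ∑ l, (1/2) * (D.σInv x i p *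
      (pd (fun y => D.σ y p l) m x - pd (fun y => D.σ y m p) l x + pd (fun y => D.σ y m l) p x)
      * D.σInv x l j) := by
    refine Finset.sum_congr rfl fun p _ => ?_
    simp only [Γc, Finset.mul_sum, Finset.sum_mul]
    refine Finset.sum_congr rfl fun l _ => ?_
    rw [σInv_symm D x j l]; ring
  rw [pd_σInv, hA, hB, ← neg_add', ← Finset.sum_add_distrib]
  congr 1
  refine Finset.sum_congr rfl fun p _ => ?_
  rw [← Finset.sum_add_distrib]
  refine Finset.sum_congr rfl fun l _ => ?_
  ring

variable {u : (Fin n → ℝ) → ℝ} (hu : ContDiff ℝ (⊤ : ℕ∞) u)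

lemma gradUp_diff (hu : ContDiff ℝ (⊤ : ℕ∞) u) (i : Fin n) :
    Differentiable ℝ (D.gradUp u i) := by
  unfold gradUp
  have h1 := σInv_diff D
  have h2 := fun j => diff_of (contDiff_pd hu j)
  fun_prop

lemma pd_gradUp (hu : ContDiff ℝ (⊤ : ℕ∞) u) (x : Fin n → ℝ) (i m : Fin n) :
    pd (D.gradUp u i) m x =
      (∑ j, D.σInv x i j * D.hess u m j x) - ∑ l, D.Γc x m l i * D.gradUp u l x := by
  have e : D.gradUp u i = fun y => ∑ j, D.σInv y i j * pd u j y := rfl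
  rw [e, pd_sum' _ _ (fun j => ((σInv_diff D i j) x).fun_mul (diff_of (contDiff_pd hu j) x))]
  have h1 : ∀ j, pd (fun y => D.σInv y i j * pd u j y) m x =
      D.σInv x i j * D.hess u m j x - (∑ l, D.Γc x m l i * (D.σInv x l j * pd u j x))
      + ((∑ k, D.σInv x i j * (D.Γc x m j k * pd u k x))
      - ∑ l, D.σInv x i l * (D.Γc x m l j * pd u j x)) := by
    intro j
    rw [pd_mul' m ((σInv_diff D i j) x) (diff_of (contDiff_pd hu j) x), pd_σInv_Γ]
    have a1 : (∑ l, D.Γc x m l i * (D.σInv x l j * pd u j x)) =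
      (∑ l, D.Γc x m l i * D.σInv x l j) * pd u j x := by
      rw [Finset.sum_mul]; exact Finset.sum_congr rfl fun l _ => by ring
    have a2 : (∑ l, D.σInv x i l * (D.Γc x m l j * pd u j x)) =
      (∑ l, D.Γc x m l j * D.σInv x i l) * pd u j x := by
      rw [Finset.sum_mul]; exact Finset.sum_congr rfl fun l _ => by ring
    rw [a1, a2, ← Finset.mul_sum, hess]
    ring
  simp only [h1, Finset.sum_add_distrib, Finset.sum_sub_distrib]
  rw [Finset.sum_comm (f := fun j l => D.σInv x i l * (D.Γc x m l j * pd u j x)), sub_self,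
    add_zero]
  congr 1
  rw [Finset.sum_comm]
  simp only [gradUp, Finset.mul_sum]

lemma inner2_eq (f g : (Fin n → ℝ) → ℝ) (x : Fin n → ℝ) :
    D.inner2 f g x = ∑ i, pd f i x * D.gradUp g i x := by
  simp only [inner2, gradUp, Finset.mul_sum]
  exact Finset.sum_congr rfl fun i _ => Finset.sum_congr rfl fun j _ => by ring

lemma inner2_eq' (f g : (Fin n → ℝ) → ℝ) (x : Fin n → ℝ) :
    D.inner2 f g x = ∑ i, D.gradUp f i x * pd g i x := by
  simp only [inner2, gradUp, Finset.sum_mul]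
  rw [Finset.sum_comm]
  exact Finset.sum_congr rfl fun i _ => Finset.sum_congr rfl fun j _ => by
    rw [σInv_symm D x j i]

lemma σ_gradUp (f : (Fin n → ℝ) → ℝ) (x : Fin n → ℝ) (i : Fin n) :
    ∑ j, D.σ x i j * D.gradUp f j x = pd f i x := by
  simp only [gradUp, Finset.mul_sum]
  rw [Finset.sum_comm]
  simp only [← mul_assoc, ← Finset.sum_mul, σ_mul_σInv]
  simp

lemma gradSq_nonneg (x : Fin n → ℝ) : 0 ≤ D.gradSq u x := by
  have e : D.gradSq u x = ∑ i, ∑ j, D.σ x i j * D.gradUp u i x * D.gradUp u j x := by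
    rw [gradSq, inner2_eq]
    refine Finset.sum_congr rfl fun i _ => ?_
    rw [← σ_gradUp D u x i, Finset.sum_mul]
    exact Finset.sum_congr rfl fun j _ => by ring
  rw [e]
  by_cases h : (fun i => D.gradUp u i x) = 0
  · have : ∀ i, D.gradUp u i x = 0 := fun i => congrFun h i
    simp [this]
  · exact (D.σ_posdef x _ h).le

lemma gradSq_diff (hu : ContDiff ℝ (⊤ : ℕ∞) u) : Differentiable ℝ (D.gradSq u) := by
  have e : D.gradSq u = fun y => ∑ i, pd u i y * D.gradUp u i y := by
    funext y; exact inner2_eq D u u y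
  rw [e]
  have h1 := gradUp_diff D hu
  have h2 := fun j => diff_of (contDiff_pd hu j)
  fun_prop

lemma pd_gradSq (hu : ContDiff ℝ (⊤ : ℕ∞) u) (x : Fin n → ℝ) (m : Fin n) :
    pd (D.gradSq u) m x = 2 * ∑ j, D.gradUp u j x * D.hess u m j x := by
  have e : D.gradSq u = fun y => ∑ i, pd u i y * D.gradUp u i y := by
    funext y; exact inner2_eq D u u y
  rw [e, pd_sum' _ _ (fun i => (diff_of (contDiff_pd hu i) x).fun_mul (gradUp_diff D hu i x))]
  have h1 : ∀ i, pd (fun y => pd u i y * D.gradUp u i y) m x =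
      D.gradUp u i x * D.hess u m i x + (∑ j, (D.σInv x j i * pd u i x) * D.hess u m j x)
      + ((∑ k, D.gradUp u i x * (D.Γc x m i k * pd u k x))
        - ∑ l, D.gradUp u l x * (D.Γc x m l i * pd u i x)) := by
    intro i
    rw [pd_mul' m (diff_of (contDiff_pd hu i) x) (gradUp_diff D hu i x), pd_gradUp D hu]
    have a1 : (∑ j, (D.σInv x j i * pd u i x) * D.hess u m j x) =
        pd u i x * ∑ j, D.σInv x i j * D.hess u m j x := by
      rw [Finset.mul_sum]
      exact Finset.sum_congr rfl fun j _ => by rw [σInv_symm D x i j]; ring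
    have a2 : (∑ l, D.gradUp u l x * (D.Γc x m l i * pd u i x)) =
        pd u i x * ∑ l, D.Γc x m l i * D.gradUp u l x := by
      rw [Finset.mul_sum]
      exact Finset.sum_congr rfl fun j _ => by ring
    rw [a1, a2, ← Finset.mul_sum, hess]
    ring
  simp only [h1, Finset.sum_add_distrib, Finset.sum_sub_distrib]
  rw [Finset.sum_comm (f := fun i l => D.gradUp u l x * (D.Γc x m l i * pd u i x)), sub_self,
    add_zero, Finset.sum_comm (f := fun i j => (D.σInv x j i * pd u i x) * D.hess u m j x)]
  simp only [← Finset.sum_mul]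
  rw [two_mul]
  rfl

lemma W_pos (x : Fin n → ℝ) : 0 < D.Wf u x :=
  Real.sqrt_pos.mpr (add_pos_of_pos_of_nonneg (D.γ_pos x) (gradSq_nonneg D x))

lemma W_sq (x : Fin n → ℝ) : D.Wf u x ^ 2 = D.γ x + D.gradSq u x :=
  Real.sq_sqrt (add_pos_of_pos_of_nonneg (D.γ_pos x) (gradSq_nonneg D x)).le

lemma W_diff (hu : ContDiff ℝ (⊤ : ℕ∞) u) : Differentiable ℝ (D.Wf u) := by
  intro x
  exact ((diff_of D.γ_smooth x).add (gradSq_diff D hu x)).sqrt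
    (add_pos_of_pos_of_nonneg (D.γ_pos x) (gradSq_nonneg D x)).ne'

lemma pd_W (hu : ContDiff ℝ (⊤ : ℕ∞) u) (x : Fin n → ℝ) (m : Fin n) :
    pd (D.Wf u) m x =
      (pd D.γ m x + 2 * ∑ j, D.gradUp u j x * D.hess u m j x) / (2 * D.Wf u x) := by
  have e : D.Wf u = fun y => Real.sqrt (D.γ y + D.gradSq u y) := rfl
  rw [e, pd_sqrt' m ((diff_of D.γ_smooth x).fun_add (gradSq_diff D hu x))
    (add_pos_of_pos_of_nonneg (D.γ_pos x) (gradSq_nonneg D x)).ne',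
    pd_add' m (diff_of D.γ_smooth x) (gradSq_diff D hu x), pd_gradSq D hu]

/-- The divergence, expanded. -/
lemma divP_eq (hu : ContDiff ℝ (⊤ : ℕ∞) u) (x : Fin n → ℝ) :
    D.divP (fun i y => D.gradUp u i y / D.Wf u y) x =
      (∑ i, ∑ j, D.gInv u x i j * D.hess u i j x) / D.Wf u x
        - D.inner2 D.γ u x / (2 * D.Wf u x ^ 3) := by
  have hW := W_pos D (u := u) x
  have h1 : ∀ i, pd (fun y => D.gradUp u i y / D.Wf u y) i x +
      ∑ k, D.Γc x i k i * (D.gradUp u k x / D.Wf u x) =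
      (∑ j, D.gInv u x i j * D.hess u i j x) / D.Wf u x
        - (pd D.γ i x * D.gradUp u i x) / (2 * D.Wf u x ^ 3) := by
    intro i
    have hi : DifferentiableAt ℝ (fun y => 1 / D.Wf u y) x := by
      have := W_diff D hu x
      simpa using this.fun_inv hW.ne'
    have e : (fun y => D.gradUp u i y / D.Wf u y) =
        fun y => D.gradUp u i y * (1 / D.Wf u y) := by funext y; ring
    have a1 : ∑ k, D.Γc x i k i * (D.gradUp u k x / D.Wf u x) =
        (∑ k, D.Γc x i k i * D.gradUp u k x) / D.Wf u x := by
      rw [Finset.sum_div]; exact Finset.sum_congr rfl fun k _ => by ring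
    have a2 : ∑ j, D.gInv u x i j * D.hess u i j x = (∑ j, D.σInv x i j * D.hess u i j x)
        - D.gradUp u i x / D.Wf u x ^ 2 * ∑ j, D.gradUp u j x * D.hess u i j x := by
      rw [Finset.mul_sum, ← Finset.sum_sub_distrib]
      exact Finset.sum_congr rfl fun j _ => by rw [gInv]; ring
    rw [e, pd_mul' i (gradUp_diff D hu i x) hi, pd_inv' i (W_diff D hu x) hW.ne',
      pd_gradUp D hu, pd_W D hu, a1, a2]
    field_simp
    ring
  rw [divP]
  simp only [h1, Finset.sum_sub_distrib, ← Finset.sum_div]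
  rw [inner2_eq]

lemma ambΓ_z00 (x : Fin n → ℝ) : D.ambΓ x 0 0 0 = 0 := by
  simp [ambΓ, Fin.sum_univ_succ, ambPd_zero', ambGInv_zs]
lemma ambΓ_z0s (x : Fin n → ℝ) (i : Fin n) :
    D.ambΓ x 0 0 i.succ = - pd D.γ i x / (2 * D.γ x) := by
  have := D.γ_pos x
  simp only [ambΓ, Fin.sum_univ_succ, ambPd_zero', ambPd_succ', ambGInv_zs, ambGInv_zz, ambG_zz,
    ambG_sz, pd_inv' i (diff_of D.γ_smooth x) this.ne']
  simp; field_simp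
lemma ambΓ_zs0 (x : Fin n → ℝ) (i : Fin n) :
    D.ambΓ x 0 i.succ 0 = - pd D.γ i x / (2 * D.γ x) := by
  have := D.γ_pos x
  simp only [ambΓ, Fin.sum_univ_succ, ambPd_zero', ambPd_succ', ambGInv_zs, ambGInv_zz, ambG_zz,
    ambG_sz, pd_inv' i (diff_of D.γ_smooth x) this.ne']
  simp; field_simp
lemma ambΓ_zss (x : Fin n → ℝ) (i j : Fin n) : D.ambΓ x 0 i.succ j.succ = 0 := by
  simp [ambΓ, Fin.sum_univ_succ, ambPd_zero', ambPd_succ', ambGInv_zs, ambG_sz, pd_const']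
lemma ambΓ_s00 (x : Fin n → ℝ) (k : Fin n) :
    D.ambΓ x k.succ 0 0 = D.gradUp D.γ k x / (2 * D.γ x ^ 2) := by
  have := D.γ_pos x
  simp only [ambΓ, Fin.sum_univ_succ, ambPd_zero', ambPd_succ', ambGInv_sz, ambGInv_ss, ambG_zz,
    pd_inv' _ (diff_of D.γ_smooth x) this.ne', gradUp]
  rw [Finset.sum_div, zero_mul, zero_add, Finset.mul_sum]
  exact Finset.sum_congr rfl fun l _ => by field_simp; ring
lemma ambΓ_s0s (x : Fin n → ℝ) (k i : Fin n) : D.ambΓ x k.succ 0 i.succ = 0 := by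
  simp [ambΓ, Fin.sum_univ_succ, ambPd_zero', ambPd_succ', ambGInv_sz, ambG_zs, pd_const']
lemma ambΓ_ss0 (x : Fin n → ℝ) (k i : Fin n) : D.ambΓ x k.succ i.succ 0 = 0 := by
  simp [ambΓ, Fin.sum_univ_succ, ambPd_zero', ambPd_succ', ambGInv_sz, ambG_zs, ambG_sz, pd_const']
lemma ambΓ_sss (x : Fin n → ℝ) (k i j : Fin n) :
    D.ambΓ x k.succ i.succ j.succ = D.Γc x i j k := by
  simp only [ambΓ, Fin.sum_univ_succ, ambPd_succ', ambGInv_sz, ambGInv_ss, ambG_ss, Γc,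
    zero_mul, zero_add]
  congr 1
  exact Finset.sum_congr rfl fun l _ => by ring

lemma ambCov_tangent (x : Fin n → ℝ) (i j : Fin n) :
    D.ambCov (fun y => tangentV u j y) (tangentV u i x) x =
      (pd (pd u j) i x - pd D.γ j x * pd u i x / (2 * D.γ x)
          - pd D.γ i x * pd u j x / (2 * D.γ x),
        fun k => D.Γc x i j k + D.gradUp D.γ k x / (2 * D.γ x ^ 2) * pd u i x * pd u j x) := by
  have hs : ∀ (i : Fin n) (f : Fin n → ℝ), ∑ k, (Pi.single i (1:ℝ) : Fin n → ℝ) k * f k = f i := by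
    intro i f; simp [Pi.single_apply]
  have hs' : ∀ (i : Fin n) (f : Fin n → ℝ), ∑ k, f k * (Pi.single i (1:ℝ) : Fin n → ℝ) k = f i := by
    intro i f; simp [Pi.single_apply]
  unfold ambCov
  refine Prod.ext ?_ ?_
  · simp only [Fin.sum_univ_succ, vComp_zero', vComp_succ', tangentV, ambΓ_z00, ambΓ_z0s,
      ambΓ_zs0, ambΓ_zss, hs, hs', zero_mul, Finset.sum_const_zero, add_zero, zero_add]
    have : ∑ k, -pd D.γ k x / (2 * D.γ x) * (Pi.single i (1:ℝ) : Fin n → ℝ) k * pd u j x =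
        -pd D.γ i x / (2 * D.γ x) * pd u j x := by
      rw [← Finset.sum_mul, hs']
    rw [this]
    have e : (fun y => pd u j y) = pd u j := rfl
    ring
  · funext k
    simp only [Fin.sum_univ_succ, vComp_zero', vComp_succ', tangentV, ambΓ_s00, ambΓ_s0s,
      ambΓ_ss0, ambΓ_sss, hs, hs', zero_mul, Finset.sum_const_zero, add_zero, zero_add, pd_const']
    ring

lemma sff_eq (x : Fin n → ℝ) (i j : Fin n) :
    D.sff u i j x = (D.hess u i j x
      - (pd D.γ j x * pd u i x + pd D.γ i x * pd u j x) / (2 * D.γ x)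
      - D.inner2 D.γ u x / (2 * D.γ x ^ 2) * (pd u i x * pd u j x)) / D.Wf u x := by
  have hγ := D.γ_pos x
  have hW := W_pos D (u := u) x
  have key : ∀ v : Fin n → ℝ, ∑ k, ∑ l, D.σ x k l * v k * (-D.gradUp u l x / D.Wf u x) =
      - (∑ k, v k * pd u k x) / D.Wf u x := by
    intro v
    rw [← Finset.sum_neg_distrib, Finset.sum_div]
    refine Finset.sum_congr rfl fun k _ => ?_
    rw [← σ_gradUp D u x k, Finset.mul_sum, ← Finset.sum_neg_distrib, Finset.sum_div]
    exact Finset.sum_congr rfl fun l _ => by ring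
  rw [sff, ambCov_tangent, ambInner]
  simp only [Fin.sum_univ_succ, vComp_zero', vComp_succ', ambG_zz, ambG_zs, ambG_sz, ambG_ss,
    normalN, zero_mul, Finset.sum_const_zero, add_zero, zero_add, key]
  have a1 : ∑ k, (D.Γc x i j k + D.gradUp D.γ k x / (2 * D.γ x ^ 2) * pd u i x * pd u j x)
      * pd u k x = (∑ k, D.Γc x i j k * pd u k x) +
      D.inner2 D.γ u x / (2 * D.γ x ^ 2) * (pd u i x * pd u j x) := by
    rw [inner2_eq', Finset.sum_div, Finset.sum_mul, ← Finset.sum_add_distrib]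
    exact Finset.sum_congr rfl fun k _ => by ring
  rw [a1, hess]
  field_simp
  ring

lemma gInv_pd (f : (Fin n → ℝ) → ℝ) (x : Fin n → ℝ) :
    ∑ i, ∑ j, D.gInv u x i j * (pd f i x * pd u j x) =
      D.inner2 f u x * D.γ x / D.Wf u x ^ 2 := by
  have hW := W_pos D (u := u) x
  have h : ∀ i, ∑ j, D.gInv u x i j * (pd f i x * pd u j x) =
      pd f i x * D.gradUp u i x * (D.γ x / D.Wf u x ^ 2) := by
    intro i
    have : ∑ j, D.gInv u x i j * (pd f i x * pd u j x) =
        pd f i x * (∑ j, D.σInv x i j * pd u j x)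
        - pd f i x * D.gradUp u i x / D.Wf u x ^ 2 * ∑ j, D.gradUp u j x * pd u j x := by
      rw [Finset.mul_sum, Finset.mul_sum, ← Finset.sum_sub_distrib]
      exact Finset.sum_congr rfl fun j _ => by rw [gInv]; ring
    rw [this, ← inner2_eq']
    change pd f i x * D.gradUp u i x - _ * D.gradSq u x = _
    have e : D.gradSq u x = D.Wf u x ^ 2 - D.γ x := by rw [W_sq]; ring
    rw [e]; field_simp; ring
  simp only [h, ← Finset.sum_mul]
  rw [inner2_eq]; ring

lemma gInv_symm (x : Fin n → ℝ) (i j : Fin n) : D.gInv u x i j = D.gInv u x j i := by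
  rw [gInv, gInv, σInv_symm D x i j]; ring

lemma nH_eq (x : Fin n → ℝ) :
    D.nH u x = (∑ i, ∑ j, D.gInv u x i j * D.hess u i j x) / D.Wf u x -
            (2 * D.γ x + D.gradSq u x) / (D.Wf u x) ^ 3 *
              (D.inner2 D.γ u x / (2 * D.γ x)) := by
  have hγ := D.γ_pos x
  have hW := W_pos D (u := u) x
  have h2 : ∑ i, ∑ j, D.gInv u x i j * (pd D.γ j x * pd u i x) =
      D.inner2 D.γ u x * D.γ x / D.Wf u x ^ 2 := by
    rw [Finset.sum_comm, ← gInv_pd]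
    exact Finset.sum_congr rfl fun i _ => Finset.sum_congr rfl fun j _ => by
      rw [gInv_symm D x j i]
  have e : D.nH u x = ((∑ i, ∑ j, D.gInv u x i j * D.hess u i j x)
      - (∑ i, ∑ j, D.gInv u x i j * (pd D.γ j x * pd u i x)) / (2 * D.γ x)
      - (∑ i, ∑ j, D.gInv u x i j * (pd D.γ i x * pd u j x)) / (2 * D.γ x)
      - (∑ i, ∑ j, D.gInv u x i j * (pd u i x * pd u j x)) *
        (D.inner2 D.γ u x / (2 * D.γ x ^ 2))) / D.Wf u x := by
    rw [nH]
    simp only [sff_eq, Finset.sum_div, Finset.sum_mul, ← Finset.sum_sub_distrib]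
    exact Finset.sum_congr rfl fun i _ => Finset.sum_congr rfl fun j _ => by ring
  rw [e, h2, gInv_pd, gInv_pd]
  change (_ - _ - _ - D.gradSq u x * _ / _ * _) / _ = _
  field_simp
  ring

end helpers

/-- The mean curvature `H` of the Killing graph of `u`
satisfies the divergence-form identities (19) and (20), and equivalently the
nondivergence form (14):
`nH = div(∇u/W) − (1/(2γW))⟨∇γ, ∇u⟩ = div(∇u/W) − (γ/W)⟨∇̄_Y Y, ∇u⟩`
`   = (σ^{ij} − u^i u^j/W²) u_{i;j}/W − ((2γ + |∇u|²)/W³)⟨∇γ/(2γ), ∇u⟩`. -/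
theorem mean_curvature_divergence_form
    {n : ℕ} (D : LeafData n) (Ω : Set (Fin n → ℝ))
    (hΩo : IsOpen Ω) (hΩb : Bornology.IsBounded Ω)
    (u : (Fin n → ℝ) → ℝ) (hu : ContDiff ℝ (⊤ : ℕ∞) u) :
    ∀ x ∈ Ω,
      (D.nH u x =
          D.divP (fun i y => D.gradUp u i y / D.Wf u y) x -
            1 / (2 * D.γ x * D.Wf u x) * D.inner2 D.γ u x) ∧
        (D.nH u x =
          D.divP (fun i y => D.gradUp u i y / D.Wf u y) x -
            D.γ x / D.Wf u x * (D.inner2 D.γ u x / (2 * (D.γ x) ^ 2))) ∧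
        D.nH u x =
          (∑ i, ∑ j, D.gInv u x i j * D.hess u i j x) / D.Wf u x -
            (2 * D.γ x + D.gradSq u x) / (D.Wf u x) ^ 3 *
              (D.inner2 D.γ u x / (2 * D.γ x)) := by
  intro x _
  have hγ := D.γ_pos x
  have hW := W_pos D (u := u) x
  have h1 : D.nH u x = D.divP (fun i y => D.gradUp u i y / D.Wf u y) x -
            1 / (2 * D.γ x * D.Wf u x) * D.inner2 D.γ u x := by
    have e : D.gradSq u x = D.Wf u x ^ 2 - D.γ x := by rw [W_sq]; ring
    rw [divP_eq D hu, nH_eq, e]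
    field_simp
    ring
  refine ⟨h1, ?_, nH_eq D x⟩
  rw [h1]
  congr 1
  field_simp

end KMCF
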